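/- The function φ(z) = (2/√π) A(z/√2) belongs to the Fock space; that is, φ is entire and ∫_ℂ |A(z/√2)|² e^{-|z|²} dA(z) < ∞. -/

import Mathlib

open MeasureTheory Complex

/-- A(z) = ∫₀^z e^{u²} du, the antiderivative of e^{z²} vanishing at 0, the integral being
taken along the segment from 0 to z (equivalently, any path from 0 to z). -/
noncomputable def Afun (z : ℂ) : ℂ :=
  ∫ t in (0:ℝ)..1, z * Complex.exp (((t:ℂ) * z)^2)

/-!
Since `A` is an antiderivative of the entire function `e^{z²}`, it may be integrated along the path
from `0` to `x + iy` that first goes up to `iy` and then runs horizontally. On the vertical part the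
integrand has modulus at most `1`; on the horizontal part its modulus at `s + iy` is
`e^{s²} e^{-y²}`, and `∫₀ˣ e^{s²} ds ≤ 2x e^{x²} / (1 + x²)` for `x ≥ 0`. Hence
`|A(x + iy)| ≤ |y| + e^{-y²} · 2|x| e^{x²} / (1 + x²)`, so that `|A(w)|² e^{-2|w|²}` is dominated by
a multiple of the integrable function `(1 + x²)⁻¹ e^{-y²}`, and one substitutes `w = z / √2`.
-/

theorem hasDerivAt_integral_segment {E : Type*} [NormedAddCommGroup E] [NormedSpace ℂ E]
    [CompleteSpace E] {f : ℂ → E} (hf : Differentiable ℂ f) (z : ℂ) :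
    HasDerivAt (fun w : ℂ ↦ w • ∫ t in (0 : ℝ)..1, f (t * w)) (f z) z := by
  obtain ⟨F, hF⟩ := hf.isExactOn_univ
  have eq_sub (w : ℂ) : w • ∫ t in (0 : ℝ)..1, f (t * w) = F w - F 0 := by
    have hcont : Continuous fun t : ℝ ↦ f (0 + t • w) := hf.continuous.comp (by fun_prop)
    simpa only [zero_add, real_smul] using
      intervalIntegral.integral_unitInterval_deriv_eq_sub hcont.continuousOn
        fun t _ ↦ hF (0 + t • w) (Set.mem_univ _)
  simpa only [eq_sub] using (hF z (Set.mem_univ z)).sub_const (F 0)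

theorem integrable_mul_re_im {𝕜 : Type*} [NormedRing 𝕜] {f g : ℝ → 𝕜}
    (hf : Integrable f) (hg : Integrable g) : Integrable fun z : ℂ ↦ f z.re * g z.im :=
  (volume_preserving_equiv_real_prod.integrable_comp_emb
    measurableEquivRealProd.measurableEmbedding).2 (hf.mul_prod hg)

theorem norm_exp_sq (z : ℂ) : ‖exp (z ^ 2)‖ = Real.exp (z.re ^ 2 - z.im ^ 2) := by
  rw [norm_exp, sq, mul_re, ← sq, ← sq]

/-- A majorant of `∫₀ˣ e^{s²} ds` on `0 ≤ x`. The integral is asymptotic to `e^{x²} / (2x)`; the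
larger constant `2` makes the derivative dominate `e^{x²}` on the whole line. -/
noncomputable def expSqMajorant (x : ℝ) : ℝ :=
  2 * x / (1 + x ^ 2) * Real.exp (x ^ 2)

theorem hasDerivAt_expSqMajorant (x : ℝ) :
    HasDerivAt expSqMajorant
      (Real.exp (x ^ 2) * (1 + (1 + 3 * x ^ 4) / (1 + x ^ 2) ^ 2)) x := by
  have hpos : 1 + x ^ 2 ≠ 0 := by positivity
  have hsq : HasDerivAt (fun s : ℝ ↦ s ^ 2) (2 * x) x := by simpa using hasDerivAt_pow 2 x
  have hquot := ((hasDerivAt_id' x).const_mul 2).fun_div (hsq.const_add 1) hpos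
  refine (hquot.fun_mul hsq.exp).congr_deriv ?_
  field_simp
  ring

theorem expSqMajorant_sq_le (x : ℝ) :
    expSqMajorant x ^ 2 ≤ 4 * (1 + x ^ 2)⁻¹ * Real.exp (2 * x ^ 2) := by
  have hfrac : (2 * x / (1 + x ^ 2)) ^ 2 ≤ 4 * (1 + x ^ 2)⁻¹ := by
    field_simp
    linarith
  calc expSqMajorant x ^ 2 = (2 * x / (1 + x ^ 2)) ^ 2 * Real.exp (2 * x ^ 2) := by
        rw [expSqMajorant, mul_pow, ← Real.exp_nat_mul, Nat.cast_ofNat]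
    _ ≤ 4 * (1 + x ^ 2)⁻¹ * Real.exp (2 * x ^ 2) := by gcongr

theorem hasDerivAt_Afun (z : ℂ) : HasDerivAt Afun (exp (z ^ 2)) z := by
  have hd : Differentiable ℂ fun w : ℂ ↦ exp (w ^ 2) := by fun_prop
  have h := hasDerivAt_integral_segment hd z
  simp only [smul_eq_mul, ← intervalIntegral.integral_const_mul] at h
  exact h

theorem differentiable_Afun : Differentiable ℂ Afun :=
  fun z ↦ (hasDerivAt_Afun z).differentiableAt

theorem Afun_neg (z : ℂ) : Afun (-z) = -Afun z := by
  simp only [Afun, mul_neg, neg_sq, neg_mul, intervalIntegral.integral_neg]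

theorem norm_Afun_mul_I_le (y : ℝ) : ‖Afun (y * I)‖ ≤ |y| := by
  have hexp (t : ℝ) : ‖exp ((t * (y * I)) ^ 2)‖ ≤ 1 := by
    have hre : ((t : ℂ) * (y * I)).re = 0 := by simp
    rw [norm_exp_sq, hre, Real.exp_le_one_iff]
    linarith [sq_nonneg ((t : ℂ) * (y * I)).im]
  have hbound (t : ℝ) : ‖y * I * exp ((t * (y * I)) ^ 2)‖ ≤ |y| := by
    simpa using mul_le_of_le_one_right (abs_nonneg y) (hexp t)
  simpa [Afun] using
    intervalIntegral.norm_integral_le_of_norm_le_const (a := 0) (b := 1) fun t _ ↦ hbound t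

theorem norm_Afun_add_mul_I_le {x : ℝ} (hx : 0 ≤ x) (y : ℝ) :
    ‖Afun (x + y * I)‖ ≤ |y| + Real.exp (-y ^ 2) * expSqMajorant x := by
  have hderiv (s : ℝ) :
      HasDerivAt (fun s : ℝ ↦ Afun (s + y * I)) (exp ((s + y * I) ^ 2)) s :=
    ((hasDerivAt_Afun (s + y * I)).comp_add_const (s : ℂ) (y * I)).comp_ofReal
  have hstart : ‖Afun ((0 : ℝ) + y * I)‖ ≤ |y| + Real.exp (-y ^ 2) * expSqMajorant 0 := by
    simpa [expSqMajorant] using norm_Afun_mul_I_le y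
  have hbound (s : ℝ) : ‖exp ((s + y * I) ^ 2)‖ ≤
      Real.exp (-y ^ 2) * (Real.exp (s ^ 2) * (1 + (1 + 3 * s ^ 4) / (1 + s ^ 2) ^ 2)) :=
    calc ‖exp ((s + y * I) ^ 2)‖ = Real.exp (-y ^ 2) * Real.exp (s ^ 2) := by
          rw [norm_exp_sq, ← Real.exp_add]
          simp [neg_add_eq_sub]
      _ ≤ _ := by
          gcongr
          exact le_mul_of_one_le_right (by positivity) (le_add_of_nonneg_right (by positivity))
  exact image_norm_le_of_norm_deriv_right_le_deriv_boundary
    (fun s _ ↦ (hderiv s).continuousAt.continuousWithinAt)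
    (fun s _ ↦ (hderiv s).hasDerivWithinAt) hstart
    (fun s ↦ ((hasDerivAt_expSqMajorant s).const_mul _).const_add _)
    (fun s _ ↦ hbound s) ⟨hx, le_rfl⟩

theorem norm_Afun_le (w : ℂ) :
    ‖Afun w‖ ≤ |w.im| + Real.exp (-w.im ^ 2) * expSqMajorant |w.re| := by
  rcases le_total 0 w.re with hre | hre
  · simpa [abs_of_nonneg hre] using norm_Afun_add_mul_I_le hre w.im
  · have h := norm_Afun_add_mul_I_le (neg_nonneg.2 hre) (-w.im)
    have hw : ((-w.re : ℝ) : ℂ) + ((-w.im : ℝ) : ℂ) * I = -w := by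
      apply Complex.ext <;> simp
    rwa [hw, Afun_neg, norm_neg, abs_neg, neg_sq, ← abs_of_nonpos hre] at h

theorem sq_norm_Afun_le (w : ℂ) :
    ‖Afun w‖ ^ 2 ≤ 2 * (w.im ^ 2 +
      4 * (1 + w.re ^ 2)⁻¹ * Real.exp (2 * (w.re ^ 2 - w.im ^ 2))) :=
  calc ‖Afun w‖ ^ 2 ≤ (|w.im| + Real.exp (-w.im ^ 2) * expSqMajorant |w.re|) ^ 2 := by
        gcongr
        exact norm_Afun_le w
    _ ≤ 2 * (|w.im| ^ 2 + (Real.exp (-w.im ^ 2) * expSqMajorant |w.re|) ^ 2) := add_sq_le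
    _ ≤ 2 * (w.im ^ 2 + Real.exp (-w.im ^ 2) ^ 2 *
          (4 * (1 + w.re ^ 2)⁻¹ * Real.exp (2 * w.re ^ 2))) := by
        rw [mul_pow, sq_abs]
        gcongr
        simpa only [sq_abs] using expSqMajorant_sq_le |w.re|
    _ = 2 * (w.im ^ 2 + 4 * (1 + w.re ^ 2)⁻¹ * Real.exp (2 * (w.re ^ 2 - w.im ^ 2))) := by
        rw [mul_left_comm, ← Real.exp_nat_mul, ← Real.exp_add, Nat.cast_ofNat]
        ring_nf

theorem sq_mul_exp_neg_two_mul_le (x y : ℝ) :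
    y ^ 2 * Real.exp (-(2 * (x ^ 2 + y ^ 2))) ≤ (1 + x ^ 2)⁻¹ * Real.exp (-y ^ 2) := by
  have hx : Real.exp (-(2 * x ^ 2)) ≤ (1 + x ^ 2)⁻¹ := by
    rw [Real.exp_neg]
    gcongr
    linarith [Real.add_one_le_exp (2 * x ^ 2), sq_nonneg x]
  have hy : y ^ 2 * Real.exp (-y ^ 2) ≤ 1 := by
    rw [Real.exp_neg, ← div_eq_mul_inv, div_le_one (Real.exp_pos _)]
    linarith [Real.add_one_le_exp (y ^ 2)]
  calc y ^ 2 * Real.exp (-(2 * (x ^ 2 + y ^ 2)))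
      = Real.exp (-(2 * x ^ 2)) * (y ^ 2 * Real.exp (-y ^ 2) * Real.exp (-y ^ 2)) := by
        rw [mul_assoc, mul_left_comm, ← Real.exp_add, ← Real.exp_add]
        ring_nf
    _ ≤ (1 + x ^ 2)⁻¹ * (1 * Real.exp (-y ^ 2)) := by gcongr
    _ = (1 + x ^ 2)⁻¹ * Real.exp (-y ^ 2) := by rw [one_mul]

theorem sq_norm_Afun_mul_exp_le (w : ℂ) :
    ‖Afun w‖ ^ 2 * Real.exp (-(2 * ‖w‖ ^ 2)) ≤
      10 * ((1 + w.re ^ 2)⁻¹ * Real.exp (-w.im ^ 2)) := by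
  have hnorm : ‖w‖ ^ 2 = w.re ^ 2 + w.im ^ 2 := by
    rw [Complex.sq_norm, normSq_apply, sq, sq]
  have hvertical := sq_mul_exp_neg_two_mul_le w.re w.im
  have hhorizontal : Real.exp (2 * (w.re ^ 2 - w.im ^ 2)) * Real.exp (-(2 * ‖w‖ ^ 2)) ≤
      Real.exp (-w.im ^ 2) := by
    rw [← Real.exp_add, hnorm]
    gcongr
    linarith [sq_nonneg w.im]
  calc ‖Afun w‖ ^ 2 * Real.exp (-(2 * ‖w‖ ^ 2))
      ≤ 2 * (w.im ^ 2 + 4 * (1 + w.re ^ 2)⁻¹ * Real.exp (2 * (w.re ^ 2 - w.im ^ 2))) *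
          Real.exp (-(2 * ‖w‖ ^ 2)) := by
        gcongr
        exact sq_norm_Afun_le w
    _ = 2 * (w.im ^ 2 * Real.exp (-(2 * ‖w‖ ^ 2)) + 4 * (1 + w.re ^ 2)⁻¹ *
          (Real.exp (2 * (w.re ^ 2 - w.im ^ 2)) * Real.exp (-(2 * ‖w‖ ^ 2)))) := by ring
    _ ≤ 2 * ((1 + w.re ^ 2)⁻¹ * Real.exp (-w.im ^ 2) +
          4 * (1 + w.re ^ 2)⁻¹ * Real.exp (-w.im ^ 2)) := by
        rw [← hnorm] at hvertical
        gcongr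
    _ = 10 * ((1 + w.re ^ 2)⁻¹ * Real.exp (-w.im ^ 2)) := by ring

theorem integrable_sq_norm_Afun_mul_exp :
    Integrable fun w : ℂ ↦ ‖Afun w‖ ^ 2 * Real.exp (-(2 * ‖w‖ ^ 2)) := by
  have hgauss : Integrable fun y : ℝ ↦ Real.exp (-y ^ 2) := by
    simpa using integrable_exp_neg_mul_sq one_pos
  have hcont := differentiable_Afun.continuous
  refine ((integrable_mul_re_im integrable_inv_one_add_sq hgauss).const_mul 10).mono'
    (by fun_prop) (.of_forall fun w ↦ ?_)
  rw [Real.norm_of_nonneg (by positivity)]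
  exact sq_norm_Afun_mul_exp_le w

/-- The function φ(z) = (2/√π) A(z/√2) is entire and belongs to the Fock space:
∫_ℂ |A(z/√2)|² e^{-|z|²} dA(z) < ∞. -/
theorem A_in_fock :
    Differentiable ℂ (fun z : ℂ => 2 / (Real.sqrt Real.pi : ℂ) * Afun (z / (Real.sqrt 2 : ℂ))) ∧
    Integrable (fun z : ℂ => ‖Afun (z / (Real.sqrt 2 : ℂ))‖^2 * Real.exp (-‖z‖^2)) := by
  constructor
  · have := differentiable_Afun
    fun_prop
  · have hsmul (z : ℂ) : (√2)⁻¹ • z = z / (√2 : ℂ) := by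
      rw [real_smul, ofReal_inv, inv_mul_eq_div]
    have hnorm (z : ℂ) : 2 * ‖z / (√2 : ℂ)‖ ^ 2 = ‖z‖ ^ 2 := by
      rw [norm_div, norm_real, div_pow, Real.norm_eq_abs, sq_abs, Real.sq_sqrt zero_le_two]
      ring
    simpa only [hsmul, hnorm] using
      integrable_sq_norm_Afun_mul_exp.comp_smul (inv_ne_zero (Real.sqrt_ne_zero'.2 two_pos))
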